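/- arXiv:2006.16213 — 3 statements merged into one kernel-verified Lean document; each statement's English description precedes it below -/
import Mathlib

section
/- Let F : [0,∞) → ℝ be a function, let m and n be positive integers, and set d := min{m,n}. The following are equivalent: (1) F[A] is totally non-negative for every totally non-negative m × n matrix A; (2) F[A] is totally non-negative for every totally non-negative d × d matrix A; (3) F is a non-negative constant, or: if d = 1, F(x) ≥ 0 for all x ≥ 0; if d = 2, F(x) = c·1_{x>0} or F(x) = c·x^α for some c > 0 and some α > 0; if d = 3, F(x) = c·x^α for some c > 0 and some α ≥ 1; if d ≥ 4, F(x) = c·x for some c > 0. -/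
/-- An `m × n` real matrix is totally non-negative if all of its minors
(determinants of square submatrices on increasing row and column indices)
are non-negative. -/
def IsTNMat {m n : ℕ} (A : Matrix (Fin m) (Fin n) ℝ) : Prop :=
  ∀ (k : ℕ) (r : Fin k → Fin m) (c : Fin k → Fin n),
    StrictMono r → StrictMono c → 0 ≤ (A.submatrix r c).det

theorem tn_mono {m n p q : ℕ} {A : Matrix (Fin m) (Fin n) ℝ} (hA : IsTNMat A)
    {r : Fin p → Fin m} {c : Fin q → Fin n} (hr : Monotone r) (hc : Monotone c) :
    IsTNMat (A.submatrix r c) := by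
  intro k r' c' hr' hc'
  rw [Matrix.submatrix_submatrix]
  by_cases h1 : Function.Injective (r ∘ r')
  · by_cases h2 : Function.Injective (c ∘ c')
    · exact hA k _ _ ((hr.comp hr'.monotone).strictMono_of_injective h1)
        ((hc.comp hc'.monotone).strictMono_of_injective h2)
    · simp only [Function.Injective, not_forall] at h2
      obtain ⟨i, j, hij, hne⟩ := h2
      rw [Matrix.det_zero_of_column_eq hne]
      intro l
      simp only [Matrix.submatrix_apply, hij]
  · simp only [Function.Injective, not_forall] at h1
    obtain ⟨i, j, hij, hne⟩ := h1
    rw [Matrix.det_zero_of_row_eq hne]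
    funext l
    simp only [Matrix.submatrix_apply, hij]

/-- The clamping map. -/
def clampFin (m d : ℕ) (hd : 0 < d) (i : Fin m) : Fin d :=
  ⟨min i.1 (d - 1), by omega⟩

theorem clampFin_mono (m d : ℕ) (hd : 0 < d) : Monotone (clampFin m d hd) := by
  intro i j hij
  have : i.1 ≤ j.1 := hij
  simp only [clampFin, Fin.mk_le_mk]
  omega

theorem rect_to_small {m n p q : ℕ} (F : ℝ → ℝ) (hp : 0 < p) (hq : 0 < q) (hpm : p ≤ m) (hqn : q ≤ n)
    (H : ∀ A : Matrix (Fin m) (Fin n) ℝ, IsTNMat A → IsTNMat (A.map F)) :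
    ∀ A : Matrix (Fin p) (Fin q) ℝ, IsTNMat A → IsTNMat (A.map F) := by
  intro A hA
  have h1 := H _ (tn_mono hA (clampFin_mono m p hp) (clampFin_mono n q hq))
  have h2 := tn_mono h1 (Fin.strictMono_castLE hpm).monotone (Fin.strictMono_castLE hqn).monotone
  convert h2 using 1
  ext i j
  simp only [Matrix.map_apply, Matrix.submatrix_apply]
  congr 2
  · ext; simp [clampFin]; omega
  · ext; simp [clampFin]; omega

theorem square_to_rect {m n d : ℕ} (F : ℝ → ℝ) (hd : d = min m n)
    (H : ∀ A : Matrix (Fin d) (Fin d) ℝ, IsTNMat A → IsTNMat (A.map F)) :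
    ∀ A : Matrix (Fin m) (Fin n) ℝ, IsTNMat A → IsTNMat (A.map F) := by
  intro A hA k r c hr hc
  have hk1 : k ≤ m := by simpa using Fintype.card_le_of_injective r hr.injective
  have hk2 : k ≤ n := by simpa using Fintype.card_le_of_injective c hc.injective
  rcases Nat.eq_zero_or_pos k with rfl | hk
  · simp
  · have h := rect_to_small F hk hk (by omega : k ≤ d) (by omega : k ≤ d) H (A.submatrix r c)
      (tn_mono hA hr.monotone hc.monotone) k id id strictMono_id strictMono_id
    simpa [Matrix.submatrix_map] using h

theorem tn_one {m n : ℕ} {A : Matrix (Fin m) (Fin n) ℝ} (hA : IsTNMat A) (i : Fin m) (j : Fin n) :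
    0 ≤ A i j := by
  have := hA 1 ![i] ![j] (by intro a b h; omega) (by intro a b h; omega)
  rw [Matrix.det_fin_one] at this
  simpa using this

theorem tn_two {m n : ℕ} {A : Matrix (Fin m) (Fin n) ℝ} (hA : IsTNMat A) {i i' : Fin m}
    {j j' : Fin n} (hi : i < i') (hj : j < j') :
    A i j' * A i' j ≤ A i j * A i' j' := by
  have := hA 2 ![i, i'] ![j, j'] (by simpa [Fin.strictMono_iff_lt_succ] using hi)
    (by simpa [Fin.strictMono_iff_lt_succ] using hj)
  rw [Matrix.det_fin_two] at this
  simp at this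
  linarith

theorem tn_full {d : ℕ} {A : Matrix (Fin d) (Fin d) ℝ} (hA : IsTNMat A) : 0 ≤ A.det := by
  simpa using hA d id id strictMono_id strictMono_id

theorem sm22 : ∀ r : Fin 2 → Fin 2, StrictMono r → r = ![0,1] := by decide
theorem sm23 : ∀ r : Fin 2 → Fin 3, StrictMono r → r = ![0,1] ∨ r = ![0,2] ∨ r = ![1,2] := by decide
theorem sm33 : ∀ r : Fin 3 → Fin 3, StrictMono r → r = ![0,1,2] := by decide
theorem sm24 : ∀ r : Fin 2 → Fin 4, StrictMono r → r = ![0,1] ∨ r = ![0,2] ∨ r = ![0,3] ∨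
    r = ![1,2] ∨ r = ![1,3] ∨ r = ![2,3] := by decide
theorem sm34 : ∀ r : Fin 3 → Fin 4, StrictMono r → r = ![0,1,2] ∨ r = ![0,1,3] ∨ r = ![0,2,3] ∨
    r = ![1,2,3] := by decide
theorem sm44 : ∀ r : Fin 4 → Fin 4, StrictMono r → r = id := by
  intro r hr
  have h := hr (show (0 : Fin 4) < 1 by decide)
  have h2 := hr (show (1 : Fin 4) < 2 by decide)
  have h3 := hr (show (2 : Fin 4) < 3 by decide)
  funext i
  fin_cases i <;> simp <;> omega

theorem tn_mk2 {A : Matrix (Fin 2) (Fin 2) ℝ} (h1 : ∀ i j, 0 ≤ A i j)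
    (h2 : A 0 1 * A 1 0 ≤ A 0 0 * A 1 1) : IsTNMat A := by
  intro k r c hr hc
  have hk : k ≤ 2 := by simpa using Fintype.card_le_of_injective r hr.injective
  interval_cases k
  · simp
  · simpa using h1 _ _
  · rw [sm22 r hr, sm22 c hc, Matrix.det_fin_two]
    simp
    linarith

theorem tn_mk3 {A : Matrix (Fin 3) (Fin 3) ℝ} (h1 : ∀ i j, 0 ≤ A i j)
    (h2 : ∀ i i' j j', i < i' → j < j' → A i j' * A i' j ≤ A i j * A i' j')
    (h3 : 0 ≤ A.det) : IsTNMat A := by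
  intro k r c hr hc
  have hk : k ≤ 3 := by simpa using Fintype.card_le_of_injective r hr.injective
  interval_cases k
  · simp
  · simpa using h1 _ _
  · rw [Matrix.det_fin_two]
    have := h2 (r 0) (r 1) (c 0) (c 1) (hr (by decide)) (hc (by decide))
    simp only [Matrix.submatrix_apply]
    linarith
  · rw [sm33 r hr, sm33 c hc]
    rw [Matrix.det_fin_three] at h3 ⊢
    simpa using h3

/-- The bad `4 × 4` matrix. -/
noncomputable def badM (t : ℝ) : Matrix (Fin 4) (Fin 4) ℝ :=
  !![1, 1, 1, 1; 1, 1+t, 1+2*t, 1+2*t; 1, 1+2*t, 1+4*t, 1+5*t; 1, 1+3*t, 1+6*t, 1+8*t]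

theorem badM_tn (t : ℝ) (ht : 0 ≤ t) : IsTNMat (badM t) := by
  intro k r c hr hc
  have hk : k ≤ 4 := by simpa using Fintype.card_le_of_injective r hr.injective
  interval_cases k
  · simp
  · simp
    generalize r 0 = i
    generalize c 0 = j
    fin_cases i <;> fin_cases j <;> simp [badM] <;> positivity
  · rw [Matrix.det_fin_two]
    rcases sm24 r hr with h | h | h | h | h | h <;> rcases sm24 c hc with h' | h' | h' | h' | h' | h' <;>
      subst h <;> subst h' <;> simp [badM] <;> nlinarith [mul_nonneg ht ht]
  · rw [Matrix.det_fin_three]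
    rcases sm34 r hr with h | h | h | h <;> rcases sm34 c hc with h' | h' | h' | h' <;>
      subst h <;> subst h' <;> simp [badM] <;> ring_nf <;> nlinarith [mul_nonneg ht ht, mul_nonneg ht (mul_nonneg ht ht)]
  · rw [sm44 r hr, sm44 c hc]
    have : (badM t).det = 0 := by
      rw [badM, Matrix.det_succ_row_zero]
      simp [Fin.sum_univ_succ, Matrix.det_fin_three, Fin.succAbove]
      ring
    simp [this]

theorem mink_ineq {α l p r : ℝ} (hα : 1 ≤ α) (hl : 1 ≤ l) (hp : 0 ≤ p) (hr : 0 < r) (hpr : p ≤ r) :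
    ((1 + l * p) ^ α - 1) * ((1 + r) ^ α - 1) ≤ ((1 + l * r) ^ α - 1) * ((1 + p) ^ α - 1) := by
  have hα0 : 0 < α := by linarith
  have hR : 1 < (1 + r) ^ α := Real.one_lt_rpow (by linarith) hα0
  have hP : 1 ≤ (1 + p) ^ α := Real.one_le_rpow (by linarith) hα0.le
  have hPR : (1 + p) ^ α ≤ (1 + r) ^ α := Real.rpow_le_rpow (by linarith) (by linarith) hα0.le
  obtain ⟨t, ht⟩ : ∃ t, t = ((1 + p) ^ α - 1) / ((1 + r) ^ α - 1) := ⟨_, rfl⟩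
  have ht' : t * ((1 + r) ^ α - 1) = (1 + p) ^ α - 1 := by
    rw [ht]; field_simp [(by linarith : (1 + r) ^ α - 1 ≠ 0)]
  have ht0 : 0 ≤ t := by rw [ht]; exact div_nonneg (by linarith) (by linarith)
  have ht1 : t ≤ 1 := by rw [ht]; exact div_le_one_of_le₀ (by linarith) (by linarith)
  have hs0 : 0 ≤ 1 - t := by linarith
  have hlr : 0 ≤ l * r := by positivity
  have hlp : 0 ≤ l * p := by positivity
  have e1 : ∀ x : ℝ, 0 ≤ x → (x ^ (1 / α)) ^ α = x := by
    intro x hx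
    rw [← Real.rpow_mul hx]; field_simp; simp
  have e2 : ∀ x : ℝ, 0 ≤ x → (x ^ α) ^ (1 / α) = x := by
    intro x hx
    rw [← Real.rpow_mul hx]; field_simp; simp
  have key := Real.Lp_add_le_of_nonneg (Finset.univ : Finset (Fin 2))
    (f := ![(1 - t) ^ (1 / α) * 1, t ^ (1 / α) * (1 + l * r)])
    (g := ![(1 - t) ^ (1 / α) * (l - 1), t ^ (1 / α) * (l - 1)]) hα
    (by intro i _; fin_cases i <;> simp <;> positivity)
    (by intro i _; fin_cases i <;> simp
        · exact mul_nonneg (by positivity) (by linarith)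
        · exact mul_nonneg (by positivity) (by linarith))
  simp only [Fin.sum_univ_two, Matrix.cons_val_zero, Matrix.cons_val_one, ← mul_add] at key
  have a1 : (1 : ℝ) + (l - 1) = l := by ring
  have a2 : 1 + l * r + (l - 1) = l * (1 + r) := by ring
  have mr : ∀ x y : ℝ, 0 ≤ x → 0 ≤ y → (x ^ (1 / α) * y) ^ α = x * y ^ α := by
    intro x y hx hy
    rw [Real.mul_rpow (by positivity) hy, e1 x hx]
  rw [a1, a2, mr _ l hs0 (by linarith), mr _ (l * (1 + r)) ht0 (by positivity), mr _ 1 hs0 zero_le_one,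
    mr _ (1 + l * r) ht0 (by linarith), mr _ (l - 1) hs0 (by linarith), mr _ (l - 1) ht0 (by linarith),
    Real.mul_rpow (by linarith) (by linarith)] at key
  have b1 : (1 - t) * l ^ α + t * (l ^ α * (1 + r) ^ α) = (l * (1 + p)) ^ α := by
    rw [Real.mul_rpow (by linarith) (by linarith)]
    linear_combination l ^ α * ht'
  have b2 : (1 - t) * (l - 1) ^ α + t * (l - 1) ^ α = (l - 1) ^ α := by ring
  rw [b1, b2, e2 _ (by positivity), e2 _ (by linarith), Real.one_rpow] at key
  have hN : 0 ≤ (1 - t) * 1 + t * (1 + l * r) ^ α := by positivity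
  have k2 : 1 + l * p ≤ ((1 - t) * 1 + t * (1 + l * r) ^ α) ^ (1 / α) := by linarith
  have k3 := Real.rpow_le_rpow (by linarith) k2 hα0.le
  rw [e1 _ hN] at k3
  rw [← ht']
  nlinarith [mul_le_mul_of_nonneg_right k3 (by linarith : 0 ≤ (1 + r) ^ α - 1)]

theorem core_ineq {α X Y Z W : ℝ} (hα : 1 ≤ α) (hX : 1 ≤ X) (hY : X ≤ Y) (hZ : X ≤ Z)
    (h : (Y - 1) * (Z - 1) ≤ (X - 1) * (W - 1)) :
    (Y ^ α - 1) * (Z ^ α - 1) ≤ (X ^ α - 1) * (W ^ α - 1) := by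
  rcases hX.eq_or_lt with rfl | hX1
  · have h0 : (Y - 1) * (Z - 1) = 0 := by
      apply le_antisymm
      · linarith
      · exact mul_nonneg (by linarith) (by linarith)
    rcases mul_eq_zero.1 h0 with h0 | h0
    · have : Y = 1 := by linarith
      simp [this]
    · have : Z = 1 := by linarith
      simp [this]
  · have hα0 : 0 < α := by linarith
    have hx : 0 < X - 1 := by linarith
    have hl : 1 ≤ (Y - 1) / (X - 1) := by rw [le_div_iff₀ hx]; linarith
    have hlx : (Y - 1) / (X - 1) * (X - 1) = Y - 1 := by field_simp
    have hm := mink_ineq hα hl hx.le (by linarith : 0 < Z - 1) (by linarith)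
    rw [hlx] at hm
    have hW' : 1 + (Y - 1) / (X - 1) * (Z - 1) ≤ W := by
      have : (Y - 1) / (X - 1) * (Z - 1) ≤ W - 1 := by
        rw [div_mul_eq_mul_div, div_le_iff₀ hx]; linarith
      linarith
    have hW2 := Real.rpow_le_rpow (by
      have : 0 ≤ (Y - 1) / (X - 1) * (Z - 1) := mul_nonneg (by linarith) (by linarith)
      linarith) hW' hα0.le
    have hXa : 1 ≤ X ^ α := Real.one_le_rpow hX hα0.le
    simp only [add_sub_cancel] at hm
    nlinarith [mul_le_mul_of_nonneg_right hW2 (by linarith : 0 ≤ X ^ α - 1)]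

theorem major_ineq {α u v x y : ℝ} (hα : 1 ≤ α) (hv : 0 ≤ v) (hx : 0 ≤ x) (hy : 0 ≤ y)
    (hxu : x ≤ u) (hyu : y ≤ u) (h : x + y ≤ u + v) : x ^ α + y ^ α ≤ u ^ α + v ^ α := by
  have hα0 : 0 < α := by linarith
  by_cases h0 : x + y ≤ u
  · have h1 := Real.add_rpow_le_rpow_add hx hy hα
    have h2 := Real.rpow_le_rpow (by linarith) h0 hα0.le
    have h3 := Real.rpow_nonneg hv α
    linarith
  · push Not at h0
    have hvv : (x + y - u) ^ α ≤ v ^ α := Real.rpow_le_rpow (by linarith) (by linarith) hα0.le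
    set w := x + y - u with hw
    have hwu : w ≤ u := by linarith
    rcases hwu.eq_or_lt with e | hlt
    · have : x = u := by linarith
      have : y = u := by linarith
      have : x = w := by linarith
      subst x y
      rw [e] at hvv
      linarith
    · have hc := convexOn_rpow hα
      have hd : 0 < u - w := by linarith
      have t0 : 0 ≤ (x - w) / (u - w) := div_nonneg (by linarith) hd.le
      have t1 : 0 ≤ (u - x) / (u - w) := div_nonneg (by linarith) hd.le
      have c1 := hc.2 (show u ∈ Set.Ici 0 by simp; linarith) (show w ∈ Set.Ici 0 by simp; linarith) t0 t1
        (by field_simp; ring)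
      have c2 := hc.2 (show w ∈ Set.Ici 0 by simp; linarith) (show u ∈ Set.Ici 0 by simp; linarith) t0 t1
        (by field_simp; ring)
      simp only [smul_eq_mul] at c1 c2
      have f1 : (x - w) / (u - w) * u + (u - x) / (u - w) * w = x := by field_simp; ring
      have f2 : (x - w) / (u - w) * w + (u - x) / (u - w) * u = y := by
        field_simp; rw [hw]; ring
      rw [f1] at c1
      rw [f2] at c2
      have f3 : (x - w) / (u - w) + (u - x) / (u - w) = 1 := by field_simp; ring
      have : x ^ α + y ^ α ≤ ((x - w) / (u - w) + (u - x) / (u - w)) * (u ^ α + w ^ α) := by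
        linarith
      rw [f3] at this
      linarith

theorem det3_alg {A B C D E F G H I : ℝ} (ha : A ≠ 0) (hb : B ≠ 0) (hc : C ≠ 0) (hd : D ≠ 0)
    (hg : G ≠ 0) : A * E * I - A * F * H - B * D * I + B * F * G + C * D * H - C * E * G =
      B * C * D * G / A * ((A * E / (B * D) - 1) * (A * I / (C * G) - 1)
        - (A * F / (C * D) - 1) * (A * H / (B * G) - 1)) := by
  field_simp
  ring

theorem det3_pos {α a b c d e f g h i : ℝ} (hα : 1 ≤ α)
    (ha' : 0 < a) (hb' : 0 < b) (hc' : 0 < c) (hd' : 0 < d) (he : 0 ≤ e) (hf : 0 ≤ f)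
    (hg' : 0 < g) (hh : 0 ≤ h) (hi : 0 ≤ i)
    (m1 : b * d ≤ a * e) (m3 : c * e ≤ b * f)
    (m7 : e * g ≤ d * h)
    (hdet : 0 ≤ a * e * i - a * f * h - b * d * i + b * f * g + c * d * h - c * e * g) :
    0 ≤ a ^ α * e ^ α * i ^ α - a ^ α * f ^ α * h ^ α - b ^ α * d ^ α * i ^ α
      + b ^ α * f ^ α * g ^ α + c ^ α * d ^ α * h ^ α - c ^ α * e ^ α * g ^ α := by
  have ha := ha'.le
  have hb := hb'.le
  have hc := hc'.le
  have hd := hd'.le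
  have hg := hg'.le
  have K := core_ineq (α := α) (X := a * e / (b * d)) (Y := a * f / (c * d)) (Z := a * h / (b * g))
    (W := a * i / (c * g)) hα
    (by rw [le_div_iff₀ (by positivity)]; linarith)
    (by rw [div_le_div_iff₀ (by positivity) (by positivity)]
        nlinarith [mul_le_mul_of_nonneg_left m3 (by positivity : 0 ≤ a * d)])
    (by rw [div_le_div_iff₀ (by positivity) (by positivity)]
        nlinarith [mul_le_mul_of_nonneg_left m7 (by positivity : 0 ≤ a * b)])
    (by
      rw [det3_alg ha'.ne' hb'.ne' hc'.ne' hd'.ne' hg'.ne'] at hdet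
      have := (mul_nonneg_iff_of_pos_left (by positivity)).1 hdet
      linarith)
  rw [Real.div_rpow (by positivity) (by positivity), Real.div_rpow (by positivity) (by positivity),
    Real.div_rpow (by positivity) (by positivity), Real.div_rpow (by positivity) (by positivity),
    Real.mul_rpow ha he, Real.mul_rpow ha hf, Real.mul_rpow ha hh, Real.mul_rpow ha hi,
    Real.mul_rpow hb hd, Real.mul_rpow hc hd, Real.mul_rpow hb hg, Real.mul_rpow hc hg] at K
  have ra := Real.rpow_pos_of_pos ha' α
  have rb := Real.rpow_pos_of_pos hb' α
  have rc := Real.rpow_pos_of_pos hc' α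
  have rd := Real.rpow_pos_of_pos hd' α
  have rg := Real.rpow_pos_of_pos hg' α
  rw [det3_alg ra.ne' rb.ne' rc.ne' rd.ne' rg.ne']
  exact mul_nonneg (by positivity) (sub_nonneg.2 K)

theorem det3_pow {α a b c d e f g h i : ℝ} (hα : 1 ≤ α)
    (ha : 0 ≤ a) (hb : 0 ≤ b) (hc : 0 ≤ c) (hd : 0 ≤ d) (he : 0 ≤ e) (hf : 0 ≤ f)
    (hg : 0 ≤ g) (hh : 0 ≤ h) (hi : 0 ≤ i)
    (m1 : b * d ≤ a * e) (m2 : c * d ≤ a * f) (m3 : c * e ≤ b * f)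
    (m4 : b * g ≤ a * h) (m5 : c * g ≤ a * i) (m6 : c * h ≤ b * i)
    (m7 : e * g ≤ d * h) (m8 : f * g ≤ d * i) (m9 : f * h ≤ e * i)
    (hdet : 0 ≤ a * e * i - a * f * h - b * d * i + b * f * g + c * d * h - c * e * g) :
    0 ≤ a ^ α * e ^ α * i ^ α - a ^ α * f ^ α * h ^ α - b ^ α * d ^ α * i ^ α
      + b ^ α * f ^ α * g ^ α + c ^ α * d ^ α * h ^ α - c ^ α * e ^ α * g ^ α := by
  have hα0 : 0 < α := by linarith
  have z0 : (0 : ℝ) ^ α = 0 := Real.zero_rpow hα0.ne'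
  have zz : ∀ {x y : ℝ}, 0 ≤ x → 0 ≤ y → x * y ≤ 0 → x ^ α * y ^ α = 0 := by
    intro x y hx hy hxy
    rw [← Real.mul_rpow hx hy, le_antisymm hxy (mul_nonneg hx hy), z0]
  have mm : ∀ {x y z w : ℝ}, 0 ≤ x → 0 ≤ y → 0 ≤ z → 0 ≤ w → x * y ≤ z * w →
      x ^ α * y ^ α ≤ z ^ α * w ^ α := by
    intro x y z w hx hy hz hw hh
    rw [← Real.mul_rpow hx hy, ← Real.mul_rpow hz hw]
    exact Real.rpow_le_rpow (mul_nonneg hx hy) hh hα0.le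
  have pa := Real.rpow_nonneg ha α
  have pb := Real.rpow_nonneg hb α
  have pc := Real.rpow_nonneg hc α
  have pd := Real.rpow_nonneg hd α
  have pe := Real.rpow_nonneg he α
  have pf := Real.rpow_nonneg hf α
  have pg := Real.rpow_nonneg hg α
  have ph := Real.rpow_nonneg hh α
  have pi := Real.rpow_nonneg hi α
  have M1 := mm hb hd ha he m1
  have M9 := mm hf hh he hi m9
  rcases ha.eq_or_lt with rfl | ha'
  · have y1 := zz hb hd (by linarith)
    have y2 := zz hb hg (by linarith)
    have y3 := zz hc hd (by linarith)
    have y4 := zz hc hg (by linarith)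
    rw [z0]
    apply le_of_eq
    linear_combination i ^ α * y1 - f ^ α * y2 - h ^ α * y3 + e ^ α * y4
  rcases hi.eq_or_lt with rfl | hi'
  · have y1 := zz hf hh (by linarith)
    have y2 := zz hf hg (by linarith)
    have y3 := zz hc hh (by linarith)
    have y4 := zz hc hg (by linarith)
    rw [z0]
    apply le_of_eq
    linear_combination a ^ α * y1 - b ^ α * y2 - d ^ α * y3 + e ^ α * y4
  rcases he.eq_or_lt with rfl | he'
  · have y1 := zz hb hd (by linarith)
    have y2 := zz hf hh (by linarith)
    have q1 : 0 ≤ b ^ α * f ^ α * g ^ α := by positivity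
    have q2 : 0 ≤ c ^ α * d ^ α * h ^ α := by positivity
    rw [z0]
    have : a ^ α * f ^ α * h ^ α = 0 := by rw [mul_assoc, y2, mul_zero]
    rw [this, y1]
    linarith
  have D1 : 0 ≤ a ^ α * (e ^ α * i ^ α - f ^ α * h ^ α) := mul_nonneg pa (by linarith)
  have D2 : 0 ≤ i ^ α * (a ^ α * e ^ α - b ^ α * d ^ α) := mul_nonneg pi (by linarith)
  have q1 : 0 ≤ b ^ α * f ^ α * g ^ α := by positivity
  have q2 : 0 ≤ c ^ α * d ^ α * h ^ α := by positivity
  rcases hb.eq_or_lt with rfl | hb'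
  · have y1 := zz hc he (by linarith)
    rw [y1, z0]
    linarith
  rcases hd.eq_or_lt with rfl | hd'
  · have y1 := zz he hg (by linarith)
    rw [mul_assoc (c ^ α) (e ^ α), y1, z0]
    linarith
  rcases hf.eq_or_lt with rfl | hf'
  · have y1 := zz hc he (by linarith)
    rw [y1, z0]
    linarith
  rcases hh.eq_or_lt with rfl | hh'
  · have y1 := zz he hg (by linarith)
    rw [mul_assoc (c ^ α) (e ^ α), y1, z0]
    linarith
  have t3 : ∀ {x y z : ℝ}, 0 ≤ x → 0 ≤ y → 0 ≤ z → x ^ α * y ^ α * z ^ α = (x * y * z) ^ α := by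
    intro x y z hx hy hz
    rw [Real.mul_rpow (mul_nonneg hx hy) hz, Real.mul_rpow hx hy]
  have w1 : a * f * h ≤ a * e * i := by nlinarith
  have w2 : b * d * i ≤ a * e * i := by nlinarith
  rcases hc.eq_or_lt with rfl | hc'
  · have := major_ineq (α := α) (u := a * e * i) (v := b * f * g) (x := a * f * h) (y := b * d * i) hα
      (by positivity) (by positivity) (by positivity) w1 w2 (by linarith)
    rw [z0, t3 ha he hi, t3 ha hf hh, t3 hb hd hi, t3 hb hf hg]
    linarith
  rcases hg.eq_or_lt with rfl | hg'
  · have := major_ineq (α := α) (u := a * e * i) (v := c * d * h) (x := a * f * h) (y := b * d * i) hα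
      (by positivity) (by positivity) (by positivity) w1 w2 (by linarith)
    rw [z0, t3 ha he hi, t3 ha hf hh, t3 hb hd hi, t3 hc hd hh]
    linarith
  exact det3_pos hα ha' hb' hc' hd' he hf hg' hh hi m1 m3 m7 hdet

theorem pow_form (F : ℝ → ℝ)
    (H : ∀ A : Matrix (Fin 2) (Fin 2) ℝ, IsTNMat A → IsTNMat (A.map F)) :
    (∃ c : ℝ, 0 ≤ c ∧ ∀ x : ℝ, 0 ≤ x → F x = c) ∨
    ∃ c : ℝ, 0 < c ∧ F 0 = 0 ∧ ∃ α : ℝ, 0 ≤ α ∧ ∀ x : ℝ, 0 < x → F x = c * x ^ α := by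
  have key : ∀ a b c d : ℝ, 0 ≤ a → 0 ≤ b → 0 ≤ c → 0 ≤ d → b * c ≤ a * d →
      0 ≤ F a ∧ F b * F c ≤ F a * F d := by
    intro a b c d ha hb hc hd h
    have h1 := H !![a, b; c, d] (tn_mk2 (by intro i j; fin_cases i <;> fin_cases j <;> simpa)
      (by simpa using h))
    have h2 := tn_one h1 0 0
    have h3 := tn_full h1
    rw [Matrix.det_fin_two] at h3
    simp at h2 h3
    exact ⟨h2, by linarith⟩
  have nn : ∀ x, 0 ≤ x → 0 ≤ F x := fun x hx => (key x 0 0 0 hx le_rfl le_rfl le_rfl (by simp)).1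
  have mul : ∀ x y, 0 ≤ x → 0 ≤ y → F x * F y = F (x * y) * F 1 := by
    intro x y hx hy
    have hxy := mul_nonneg hx hy
    exact le_antisymm (key (x * y) x y 1 hxy hx hy zero_le_one (by simp)).2
      (key x (x * y) 1 y hx hxy zero_le_one hy (by simp)).2
  rcases (nn 1 zero_le_one).eq_or_lt with h1 | h1
  · left
    refine ⟨0, le_rfl, fun x hx => ?_⟩
    have := mul x x hx hx
    rw [← h1, mul_zero] at this
    simpa using this
  · have mono : ∀ x y, 0 ≤ x → x ≤ y → F x ≤ F y := by
      intro x y hx hxy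
      have := (key y x 1 1 (hx.trans hxy) hx zero_le_one zero_le_one (by simpa)).2
      exact le_of_mul_le_mul_right this h1
    have pos : ∀ x, 0 < x → 0 < F x := by
      intro x hx
      have := mul x x⁻¹ hx.le (by positivity)
      rw [mul_inv_cancel₀ hx.ne'] at this
      have h0 := nn x hx.le
      rcases h0.eq_or_lt with h | h
      · rw [← h] at this; nlinarith
      · exact h
    rcases (nn 0 le_rfl).eq_or_lt with h0 | h0
    · right
      refine ⟨F 1, h1, h0.symm, ?_⟩
      let φ : ℝ →+ ℝ :=
        { toFun := fun t => Real.log (F (Real.exp t) / F 1)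
          map_zero' := by simp [div_self h1.ne']
          map_add' := by
            intro s t
            have hs := pos _ (Real.exp_pos s)
            have ht := pos _ (Real.exp_pos t)
            rw [← Real.log_mul (by positivity) (by positivity), Real.exp_add]
            congr 1
            have := mul _ _ (Real.exp_pos s).le (Real.exp_pos t).le
            field_simp
            linarith }
      have hφ : ∀ t, φ t = Real.log (F (Real.exp t) / F 1) := fun t => rfl
      have hm : Monotone φ := by
        intro s t hst
        rw [hφ, hφ]
        have hs := pos _ (Real.exp_pos s)
        apply Real.log_le_log (by positivity)
        exact div_le_div_of_nonneg_right (mono _ _ (Real.exp_pos s).le (Real.exp_le_exp.2 hst)) h1.le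
      have hcont : Continuous φ := MeasureTheory.Measure.AddMonoidHom.continuous_of_measurable φ hm.measurable
      have hlin : ∀ t, φ t = t * φ 1 := by
        intro t
        have := map_real_smul φ hcont t 1
        simpa using this
      refine ⟨φ 1, ?_, ?_⟩
      · have := hm zero_le_one
        simpa using this
      · intro x hx
        have h2 := hlin (Real.log x)
        rw [hφ, Real.exp_log hx] at h2
        have h3 : F x / F 1 = x ^ (φ 1) := by
          rw [Real.rpow_def_of_pos hx, ← h2, Real.exp_log (div_pos (pos x hx) h1)]
        rw [← h3]; field_simp
    · left
      refine ⟨F 1, h1.le, fun x hx => ?_⟩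
      have a := mul 0 x le_rfl hx
      have b := mul 0 1 le_rfl zero_le_one
      rw [zero_mul] at a
      exact mul_left_cancel₀ h0.ne' (by linarith)

theorem three_form (F : ℝ → ℝ)
    (H : ∀ A : Matrix (Fin 3) (Fin 3) ℝ, IsTNMat A → IsTNMat (A.map F)) :
    (∃ c : ℝ, 0 ≤ c ∧ ∀ x : ℝ, 0 ≤ x → F x = c) ∨
    ∃ c : ℝ, 0 < c ∧ ∃ α : ℝ, 1 ≤ α ∧ ∀ x : ℝ, 0 ≤ x → F x = c * x ^ α := by
  rcases pow_form F (rect_to_small F (by norm_num) (by norm_num) (by norm_num) (by norm_num) H) with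
    h | ⟨c, hc, h0, α, hα, hF⟩
  · exact Or.inl h
  · right
    have h1 := H !![2, 1, 0; 1, 1, 1; 0, 1, 2] (tn_mk3
      (by intro i j; fin_cases i <;> fin_cases j <;> simp)
      (by intro i i' j j' h h'; fin_cases i <;> fin_cases i' <;> fin_cases j <;> fin_cases j' <;>
            simp at h h' ⊢)
      (by rw [Matrix.det_fin_three]; simp; norm_num))
    have h2 := tn_full h1
    rw [Matrix.det_fin_three] at h2
    simp [h0, hF 1 one_pos, hF 2 two_pos] at h2
    have hp : 0 < (2 : ℝ) ^ α := by positivity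
    have h3 : (2 : ℝ) ≤ 2 ^ α := by
      by_contra hlt
      push Not at hlt
      have : 0 < c * c * c * (2 : ℝ) ^ α * (2 - 2 ^ α) := by
        have : 0 < 2 - (2 : ℝ) ^ α := by linarith
        positivity
      nlinarith
    have h4 : 1 ≤ α := by
      by_contra hlt
      push Not at hlt
      have := Real.rpow_lt_rpow_of_exponent_lt (by norm_num : (1 : ℝ) < 2) hlt
      rw [Real.rpow_one] at this
      linarith
    refine ⟨c, hc, α, h4, fun x hx => ?_⟩
    rcases hx.eq_or_lt with rfl | hx
    · rw [h0, Real.zero_rpow (by linarith), mul_zero]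
    · exact hF x hx

open Filter Topology in
theorem taylor_lim (α b : ℝ) :
    Tendsto (fun t : ℝ => ((1 + b * t) ^ α - 1 - α * b * t) / t ^ 2) (𝓝[>] 0)
      (𝓝 (α * (α - 1) / 2 * b ^ 2)) := by
  have ev : ∀ᶠ t : ℝ in 𝓝[>] 0, 0 < 1 + b * t := by
    apply eventually_nhdsWithin_of_eventually_nhds
    have : ContinuousAt (fun t : ℝ => 1 + b * t) 0 := by fun_prop
    exact this.eventually (lt_mem_nhds (by simp))
  have der : ∀ (β t : ℝ), 0 < 1 + b * t →
      HasDerivAt (fun t : ℝ => (1 + b * t) ^ β) (β * b * (1 + b * t) ^ (β - 1)) t := by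
    intro β t ht
    have h1 : HasDerivAt (fun t : ℝ => 1 + b * t) b t := by
      simpa using ((hasDerivAt_id t).const_mul b).const_add 1
    have := h1.rpow_const (p := β) (Or.inl ht.ne')
    convert this using 1
    ring
  have cont : ContinuousAt (fun t : ℝ => (1 + b * t) ^ α) 0 := (der α 0 (by simp)).continuousAt
  refine HasDerivAt.lhopital_zero_nhdsGT
    (f' := fun t => α * b * (1 + b * t) ^ (α - 1) - α * b) (g' := fun t => 2 * t) ?_ ?_ ?_ ?_ ?_ ?_
  · filter_upwards [ev] with t ht
    have h2 : HasDerivAt (fun t : ℝ => α * b * t) (α * b) t := by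
      simpa using (hasDerivAt_id t).const_mul (α * b)
    exact ((der α t ht).sub_const 1).sub h2
  · filter_upwards with t
    simpa using hasDerivAt_pow 2 t
  · filter_upwards [self_mem_nhdsWithin] with t ht
    have : (0 : ℝ) < t := ht
    positivity
  · have : ContinuousAt (fun t : ℝ => (1 + b * t) ^ α - 1 - α * b * t) 0 :=
      (cont.sub continuousAt_const).sub (by fun_prop)
    have := this.tendsto
    simp at this
    exact this.mono_left nhdsWithin_le_nhds
  · have : ContinuousAt (fun t : ℝ => t ^ 2) 0 := by fun_prop
    have := this.tendsto
    simp at this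
    exact this.mono_left nhdsWithin_le_nhds
  · have hd := (der (α - 1) 0 (by simp)).tendsto_slope_zero_right
    have := hd.const_mul (α * b / 2)
    simp at this
    refine (this.congr' ?_).trans ?_
    · filter_upwards [self_mem_nhdsWithin] with t ht
      have : (0 : ℝ) < t := ht
      field_simp
    · apply le_of_eq
      congr 1
      ring

theorem badM_det {h1 h2 h3 h4 h5 h6 h8 : ℝ} :
    (!![1, 1, 1, 1; 1, 1+h1, 1+h2, 1+h2; 1, 1+h2, 1+h4, 1+h5; 1, 1+h3, 1+h6, 1+h8] :
      Matrix (Fin 4) (Fin 4) ℝ).det =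
    h1 * ((h4 - 2 * h2) * h8 - h5 * (h6 - 2 * h3)) - (h2 - 2 * h1) * (h2 * h8 - h5 * h3)
      + h2 * (h2 * (h6 - 2 * h3) - (h4 - 2 * h2) * h3) := by
  rw [Matrix.det_succ_row_zero]
  simp [Fin.sum_univ_succ, Matrix.det_fin_three, Fin.succAbove]
  ring

open Filter Topology in
theorem four_form (F : ℝ → ℝ)
    (H : ∀ A : Matrix (Fin 4) (Fin 4) ℝ, IsTNMat A → IsTNMat (A.map F)) :
    (∃ c : ℝ, 0 ≤ c ∧ ∀ x : ℝ, 0 ≤ x → F x = c) ∨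
    ∃ c : ℝ, 0 < c ∧ ∀ x : ℝ, 0 ≤ x → F x = c * x := by
  rcases three_form F (rect_to_small F (by norm_num) (by norm_num) (by norm_num) (by norm_num) H) with
    h | ⟨c, hc, α, hα, hF⟩
  · exact Or.inl h
  · right
    refine ⟨c, hc, fun x hx => ?_⟩
    suffices hh : α = 1 by rw [hF x hx, hh, Real.rpow_one]
    by_contra hne
    have hα1 : 1 < α := lt_of_le_of_ne hα (Ne.symm hne)
    set e : ℝ → ℝ → ℝ := fun b t => ((1 + b * t) ^ α - 1 - α * b * t) / t ^ 2 with he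
    have hlim : ∀ b, Tendsto (e b) (𝓝[>] 0) (𝓝 (α * (α - 1) / 2 * b ^ 2)) := taylor_lim α
    have hk : ∀ b, Tendsto (fun t => α * b + t * e b t) (𝓝[>] 0) (𝓝 (α * b)) := by
      intro b
      have ht : Tendsto (fun t : ℝ => t) (𝓝[>] 0) (𝓝 0) := nhdsWithin_le_nhds
      have := (ht.mul (hlim b)).const_add (α * b)
      simpa using this
    set k : ℝ → ℝ → ℝ := fun b t => α * b + t * e b t with hkdef
    have ineq : ∀ t : ℝ, 0 < t → 0 ≤
        k 1 t * ((e 4 t - 2 * e 2 t) * k 8 t - k 5 t * (e 6 t - 2 * e 3 t))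
        - (e 2 t - 2 * e 1 t) * (k 2 t * k 8 t - k 5 t * k 3 t)
        + k 2 t * (k 2 t * (e 6 t - 2 * e 3 t) - (e 4 t - 2 * e 2 t) * k 3 t) := by
      intro t ht
      have ek : ∀ b, (1 + b * t) ^ α = 1 + t * k b t := by
        intro b
        simp only [hkdef, he]
        field_simp
        ring
      have h1 := tn_full (H _ (badM_tn t ht.le))
      have h2 : (badM t).map F = c • !![1, 1, 1, 1; 1, 1+t * k 1 t, 1+t * k 2 t, 1+t * k 2 t;
          1, 1+t * k 2 t, 1+t * k 4 t, 1+t * k 5 t; 1, 1+t * k 3 t, 1+t * k 6 t, 1+t * k 8 t] := by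
        simp only [← ek]
        ext i j
        fin_cases i <;> fin_cases j <;> simp [badM] <;> rw [hF _ (by positivity)] <;> simp
      rw [h2, Matrix.det_smul, badM_det] at h1
      have h3 := (mul_nonneg_iff_of_pos_left (by positivity)).1 h1
      have h4 : 0 < t ^ 4 := by positivity
      refine (mul_nonneg_iff_of_pos_left h4).1 ?_
      refine h3.trans (le_of_eq ?_)
      have d1 : t * k 2 t - 2 * (t * k 1 t) = t ^ 2 * (e 2 t - 2 * e 1 t) := by
        simp only [hkdef]; ring
      have d2 : t * k 4 t - 2 * (t * k 2 t) = t ^ 2 * (e 4 t - 2 * e 2 t) := by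
        simp only [hkdef]; ring
      have d3 : t * k 6 t - 2 * (t * k 3 t) = t ^ 2 * (e 6 t - 2 * e 3 t) := by
        simp only [hkdef]; ring
      rw [d1, d2, d3]
      ring
    have L : ∀ b b' : ℝ, Tendsto (fun t => e b t - 2 * e b' t) (𝓝[>] 0)
      (𝓝 (α * (α - 1) / 2 * b ^ 2 - 2 * (α * (α - 1) / 2 * b' ^ 2))) :=
      fun b b' => (hlim b).sub ((hlim b').const_mul 2)
    have lim := (((hk 1).mul (((L 4 2).mul (hk 8)).sub ((hk 5).mul (L 6 3)))).sub
      ((L 2 1).mul (((hk 2).mul (hk 8)).sub ((hk 5).mul (hk 3))))).add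
      ((hk 2).mul (((hk 2).mul (L 6 3)).sub ((L 4 2).mul (hk 3))))
    have fin := ge_of_tendsto lim (by filter_upwards [self_mem_nhdsWithin] with t ht using ineq t ht)
    have : 0 < α * α * α * (α - 1) := by
      have : 0 < α - 1 := by linarith
      positivity
    nlinarith

theorem const_tn {d : ℕ} (F : ℝ → ℝ) (c : ℝ) (hc : 0 ≤ c) (hF : ∀ x : ℝ, 0 ≤ x → F x = c)
    (A : Matrix (Fin d) (Fin d) ℝ) (hA : IsTNMat A) : IsTNMat (A.map F) := by
  have h0 : ∀ i j, F (A i j) = c := fun i j => hF _ (tn_one hA i j)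
  intro k r s hr hs
  rcases k with _ | _ | k
  · simp
  · rw [Matrix.det_fin_one]
    simp [h0, hc]
  · rw [Matrix.det_zero_of_row_eq (i := 0) (j := 1) (by simp)]
    funext l
    simp [h0]

theorem two_tn (F : ℝ → ℝ) (h1 : ∀ x, 0 ≤ x → 0 ≤ F x)
    (h2 : ∀ a b c d : ℝ, 0 ≤ a → 0 ≤ b → 0 ≤ c → 0 ≤ d → b * c ≤ a * d → F b * F c ≤ F a * F d)
    (A : Matrix (Fin 2) (Fin 2) ℝ) (hA : IsTNMat A) : IsTNMat (A.map F) := by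
  have p := tn_one hA
  refine tn_mk2 (fun i j => h1 _ (p i j)) (h2 _ _ _ _ (p _ _) (p _ _) (p _ _) (p _ _) ?_)
  exact tn_two hA (by decide) (by decide)

theorem powr_minor_two {c α : ℝ} (hc : 0 ≤ c) (hα : 0 ≤ α) (F : ℝ → ℝ)
    (hF : ∀ x : ℝ, 0 ≤ x → F x = c * x ^ α) :
    ∀ a b c d : ℝ, 0 ≤ a → 0 ≤ b → 0 ≤ c → 0 ≤ d → b * c ≤ a * d → F b * F c ≤ F a * F d := by
  intro a b e d ha hb he hd h
  rw [hF a ha, hF b hb, hF e he, hF d hd]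
  have := Real.rpow_le_rpow (by positivity) h hα
  rw [Real.mul_rpow hb he, Real.mul_rpow ha hd] at this
  nlinarith [mul_le_mul_of_nonneg_left this (mul_nonneg hc hc)]

theorem three_tn {c α : ℝ} (hc : 0 < c) (hα : 1 ≤ α) (F : ℝ → ℝ)
    (hF : ∀ x : ℝ, 0 ≤ x → F x = c * x ^ α)
    (A : Matrix (Fin 3) (Fin 3) ℝ) (hA : IsTNMat A) : IsTNMat (A.map F) := by
  have p := tn_one hA
  have q := fun (i i' j j' : Fin 3) (hi : i < i') (hj : j < j') => tn_two hA hi hj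
  refine tn_mk3 (fun i j => ?_) (fun i i' j j' hi hj => ?_) ?_
  · have := p i j
    simp only [Matrix.map_apply]
    rw [hF _ this]; positivity
  · exact powr_minor_two hc.le (by linarith) F hF _ _ _ _ (p _ _) (p _ _) (p _ _) (p _ _) (tn_two hA hi hj)
  · have h3 := tn_full hA
    rw [Matrix.det_fin_three] at h3
    have K := det3_pow hα (p 0 0) (p 0 1) (p 0 2) (p 1 0) (p 1 1) (p 1 2) (p 2 0) (p 2 1) (p 2 2)
      (q 0 1 0 1 (by decide) (by decide)) (q 0 1 0 2 (by decide) (by decide))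
      (q 0 1 1 2 (by decide) (by decide))
      (q 0 2 0 1 (by decide) (by decide)) (q 0 2 0 2 (by decide) (by decide))
      (q 0 2 1 2 (by decide) (by decide))
      (q 1 2 0 1 (by decide) (by decide)) (q 1 2 0 2 (by decide) (by decide))
      (q 1 2 1 2 (by decide) (by decide)) (by linarith)
    have K2 := mul_nonneg (by positivity : 0 ≤ c * c * c) K
    rw [Matrix.det_fin_three]
    simp only [Matrix.map_apply]
    simp only [fun i j => hF _ (p i j)]
    linarith

theorem lin_tn {d : ℕ} {c : ℝ} (hc : 0 < c) (F : ℝ → ℝ)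
    (hF : ∀ x : ℝ, 0 ≤ x → F x = c * x)
    (A : Matrix (Fin d) (Fin d) ℝ) (hA : IsTNMat A) : IsTNMat (A.map F) := by
  have p := tn_one hA
  have : A.map F = c • A := by
    ext i j
    simp [hF _ (p i j)]
  rw [this]
  intro k r s hr hs
  have e : (c • A).submatrix r s = c • (A.submatrix r s) := rfl
  rw [e, Matrix.det_smul]
  exact mul_nonneg (by positivity) (hA k r s hr hs)

theorem stmt_0 (F : ℝ → ℝ) (m n : ℕ) (hm : 0 < m) (hn : 0 < n) (d : ℕ)
    (hd : d = min m n) :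
    List.TFAE
      [∀ A : Matrix (Fin m) (Fin n) ℝ, IsTNMat A → IsTNMat (A.map F),
       ∀ A : Matrix (Fin d) (Fin d) ℝ, IsTNMat A → IsTNMat (A.map F),
       (∃ c : ℝ, 0 ≤ c ∧ ∀ x : ℝ, 0 ≤ x → F x = c) ∨
         (d = 1 ∧ ∀ x : ℝ, 0 ≤ x → 0 ≤ F x) ∨
         (d = 2 ∧ ∃ c : ℝ, 0 < c ∧
           ((∀ x : ℝ, 0 ≤ x → F x = if 0 < x then c else 0) ∨
            (∃ α : ℝ, 0 < α ∧ ∀ x : ℝ, 0 ≤ x → F x = c * x ^ α))) ∨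
         (d = 3 ∧ ∃ c : ℝ, 0 < c ∧ ∃ α : ℝ, 1 ≤ α ∧
           ∀ x : ℝ, 0 ≤ x → F x = c * x ^ α) ∨
         (4 ≤ d ∧ ∃ c : ℝ, 0 < c ∧ ∀ x : ℝ, 0 ≤ x → F x = c * x)] := by
  subst hd
  have hd0 : 0 < min m n := lt_min hm hn
  tfae_have 1 → 2 := rect_to_small F hd0 hd0 (min_le_left m n) (min_le_right m n)
  tfae_have 2 → 1 := square_to_rect F rfl
  tfae_have 2 → 3 := by
    intro H
    generalize min m n = d at *
    have small : ∀ p, 0 < p → p ≤ d → ∀ A : Matrix (Fin p) (Fin p) ℝ, IsTNMat A → IsTNMat (A.map F) :=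
      fun p hp hpd => rect_to_small F hp hp hpd hpd H
    rcases (by omega : d = 1 ∨ d = 2 ∨ d = 3 ∨ 4 ≤ d) with h | h | h | h
    · right; left
      refine ⟨h, fun x hx => ?_⟩
      have h1 : IsTNMat (fun _ _ => x : Matrix (Fin 1) (Fin 1) ℝ) := by
        intro k r c hr hc
        have hk : k ≤ 1 := by simpa using Fintype.card_le_of_injective r hr.injective
        interval_cases k
        · simp
        · rw [Matrix.det_fin_one]; exact hx
      exact tn_one (small 1 one_pos (by omega) _ h1) 0 0
    · rcases pow_form F (small 2 two_pos (by omega)) with hh | ⟨c, hc, h0, α, hα, hF⟩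
      · exact Or.inl hh
      · right; right; left
        refine ⟨h, c, hc, ?_⟩
        rcases hα.eq_or_lt with rfl | hα
        · left
          intro x hx
          rcases hx.eq_or_lt with rfl | hx
          · simp [h0]
          · simp [hx, hF x hx]
        · right
          refine ⟨α, hα, fun x hx => ?_⟩
          rcases hx.eq_or_lt with rfl | hx
          · rw [h0, Real.zero_rpow hα.ne', mul_zero]
          · exact hF x hx
    · rcases three_form F (small 3 (by norm_num) (by omega)) with hh | hh
      · exact Or.inl hh
      · exact Or.inr (Or.inr (Or.inr (Or.inl ⟨h, hh⟩)))
    · rcases four_form F (small 4 (by norm_num) (by omega)) with hh | hh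
      · exact Or.inl hh
      · exact Or.inr (Or.inr (Or.inr (Or.inr ⟨h, hh⟩)))
  tfae_have 3 → 2 := by
    generalize min m n = d at *
    rintro (⟨c, hc, hF⟩ | ⟨h, hF⟩ | ⟨h, c, hc, hF | ⟨α, hα, hF⟩⟩ | ⟨h, c, hc, α, hα, hF⟩ | ⟨h, c, hc, hF⟩)
    · exact const_tn F c hc hF
    · subst h
      intro A hA k r s hr hs
      have hk : k ≤ 1 := by simpa using Fintype.card_le_of_injective r hr.injective
      interval_cases k
      · simp
      · rw [Matrix.det_fin_one]; exact hF _ (tn_one hA _ _)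
    · subst h
      refine two_tn F (fun x hx => ?_) ?_
      · rw [hF x hx]; split_ifs <;> linarith
      · intro a b e d ha hb he hd h
        rw [hF a ha, hF b hb, hF e he, hF d hd]
        rcases hb.eq_or_lt with rfl | hb'
        · simp; split_ifs <;> positivity
        rcases he.eq_or_lt with rfl | he'
        · simp; split_ifs <;> positivity
        have : 0 < a * d := lt_of_lt_of_le (by positivity) h
        have ha' : 0 < a := pos_of_mul_pos_left this hd
        have hd' : 0 < d := pos_of_mul_pos_right this ha
        simp [hb', he', ha', hd']
    · subst h
      refine two_tn F (fun x hx => ?_) (powr_minor_two hc.le hα.le F hF)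
      rw [hF x hx]; positivity
    · subst h
      exact three_tn hc hα F hF
    · exact lin_tn hc F hF
  tfae_finish
end

section
/- A real 2 × 2 matrix A = (a_pq) is totally positive (all four entries and the determinant are positive) if and only if there exist λ > 0 and real numbers α₁ < α₂ and β₁ < β₂ such that a_pq = λ⁻¹·exp(α_p·β_q) for p, q ∈ {1,2}. Consequently, for any totally ordered sets X and Y that admit a totally positive kernel on X × Y, and for any x₁ < x₂ in X and y₁ < y₂ in Y, every totally positive 2 × 2 matrix A arises as the submatrix (K(x_p, y_q))_{p,q=1,2} of some totally positive kernel K : X × Y → ℝ. -/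
/-- A kernel on linearly ordered sets is totally positive if all matrices
obtained by evaluating it on increasing tuples have positive determinant. -/
def IsTPKernel {X Y : Type*} [LinearOrder X] [LinearOrder Y] (K : X → Y → ℝ) : Prop :=
  ∀ (n : ℕ) (x : Fin n → X) (y : Fin n → Y), StrictMono x → StrictMono y →
    0 < (Matrix.of fun i j : Fin n => K (x i) (y j)).det

/-- A real `2 × 2` matrix is totally positive iff all four entries and the
determinant are positive. -/
def IsTP2Mat (A : Matrix (Fin 2) (Fin 2) ℝ) : Prop :=
  (∀ p q : Fin 2, 0 < A p q) ∧ 0 < A.det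

theorem mvt_row {n : ℕ} (F F' : Fin n → ℝ → ℝ) (hF : ∀ j t, HasDerivAt (F j) (F' j t) t)
    (a b : ℝ) (hab : a < b) (M : Matrix (Fin n) (Fin n) ℝ) (i : Fin n) :
    ∃ t, a < t ∧ t < b ∧
      (M.updateRow i (fun j => F j b - F j a)).det
        = (b - a) * (M.updateRow i (fun j => F' j t)).det := by
  have hl : ∀ v : Fin n → ℝ, (M.updateRow i v).det
      = ∑ j, v j * M.adjugate j i := by
    intro v
    rw [← Matrix.cramer_transpose_apply, Matrix.cramer_eq_adjugate_mulVec,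
      ← Matrix.adjugate_transpose]
    simp only [Matrix.mulVec, dotProduct, Matrix.transpose_apply]
    exact Finset.sum_congr rfl fun j _ => mul_comm _ _
  have hd : ∀ t, HasDerivAt (fun t => ∑ j, F j t * M.adjugate j i)
      (∑ j, F' j t * M.adjugate j i) t := fun t =>
    HasDerivAt.fun_sum fun j _ => (hF j t).mul_const _
  obtain ⟨t, ⟨h1, h2⟩, h3⟩ := exists_hasDerivAt_eq_slope _ _ hab
    (fun t _ => (hd t).continuousAt.continuousWithinAt) (fun t _ => hd t)
  refine ⟨t, h1, h2, ?_⟩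
  rw [hl, hl, h3, mul_div_cancel₀ _ (sub_pos.2 hab).ne', ← Finset.sum_sub_distrib]
  exact Finset.sum_congr rfl fun j _ => by ring

theorem mvt_det {n : ℕ} (F F' : Fin n → ℝ → ℝ) (hF : ∀ j t, HasDerivAt (F j) (F' j t) t)
    (a b : Fin n → ℝ) (hab : ∀ i, a i < b i) (S : Finset (Fin n)) :
    ∃ t : Fin n → ℝ, (∀ i, a i < t i ∧ t i < b i) ∧
      (Matrix.of fun i j => F j (b i) - F j (a i)).det
        = (∏ i ∈ S, (b i - a i)) *
          (Matrix.of fun i j => if i ∈ S then F' j (t i) else F j (b i) - F j (a i)).det := by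
  induction S using Finset.induction_on with
  | empty =>
    choose t ht using fun i => exists_between (hab i)
    exact ⟨t, ht, by simp⟩
  | insert k S hk ih =>
    obtain ⟨t, ht, h⟩ := ih
    obtain ⟨s, h1, h2, h3⟩ := mvt_row F F' hF (a k) (b k) (hab k)
      (Matrix.of fun i j => if i ∈ S then F' j (t i) else F j (b i) - F j (a i)) k
    refine ⟨Function.update t k s, ?_, ?_⟩
    · intro i
      by_cases hi : i = k
      · subst hi; simp [h1, h2]
      · simp [hi, ht i]
    · rw [h, Finset.prod_insert hk, mul_comm (b k - a k), mul_assoc]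
      congr 1
      convert h3 using 2
      · ext i j
        by_cases hi : i = k
        · subst hi; simp [Matrix.updateRow_apply, hk]
        · simp [Matrix.updateRow_apply, hi]
      · congr 1
        ext i j
        by_cases hi : i = k
        · subst hi; simp [Matrix.updateRow_apply]
        · simp [Matrix.updateRow_apply, hi]

theorem exp_det_pos : ∀ (n : ℕ) (a b : Fin n → ℝ), StrictMono a → StrictMono b →
    0 < (Matrix.of fun i j : Fin n => Real.exp (a i * b j)).det := by
  intro n
  induction n with
  | zero => intro a b _ _; simp
  | succ n ih =>
    intro a b ha hb
    set c : Fin (n+1) → ℝ := fun j => b j - b 0 with hc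
    have e1 : (Matrix.of fun i j : Fin (n+1) => Real.exp (a i * b j)).det
        = (∏ i, Real.exp (a i * b 0)) *
          (Matrix.of fun i j : Fin (n+1) => Real.exp (a i * c j)).det := by
      rw [← Matrix.det_mul_column]
      congr 1
      ext i j
      simp only [Matrix.of_apply, hc, ← Real.exp_add]
      congr 1; ring
    let B : Matrix (Fin (n+1)) (Fin (n+1)) ℝ := Matrix.of fun i j =>
      Fin.cases (motive := fun _ => ℝ) (Real.exp (a 0 * c j))
        (fun k => Real.exp (a k.succ * c j) - Real.exp (a k.castSucc * c j)) i
    have e2 : (Matrix.of fun i j : Fin (n+1) => Real.exp (a i * c j)).det = B.det := by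
      apply Matrix.det_eq_of_forall_row_eq_smul_add_pred (fun _ => 1)
      · intro j; simp [B]
      · intro i j; simp [B]
    have e3 : B.det = (Matrix.of fun i j : Fin n =>
        Real.exp (a i.succ * c j.succ) - Real.exp (a i.castSucc * c j.succ)).det := by
      rw [Matrix.det_succ_column_zero, Fin.sum_univ_succ]
      have : ∀ i : Fin n, B i.succ 0 = 0 := by intro i; simp [B, hc]
      have h0 : B 0 0 = 1 := by simp [B, hc]
      simp only [this, h0]
      simp only [mul_zero, zero_mul, Finset.sum_const_zero, add_zero]
      simp
      congr 1
    have hcpos : ∀ j : Fin n, 0 < c j.succ := fun j => sub_pos.2 (hb (Fin.succ_pos j))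
    obtain ⟨t, ht, h⟩ := mvt_det (fun (j : Fin n) t => Real.exp (t * c j.succ))
      (fun j t => c j.succ * Real.exp (t * c j.succ))
      (fun j t => by
        have := ((hasDerivAt_id t).mul_const (c j.succ)).exp
        simp only [id, one_mul] at this
        rw [mul_comm]; exact this)
      (fun i => a i.castSucc) (fun i => a i.succ) (fun i => ha Fin.castSucc_lt_succ)
      Finset.univ
    have htm : StrictMono t := by
      intro i j hij
      refine (ht i).2.trans_le (le_trans (ha.monotone ?_) (ht j).1.le)
      rw [Fin.le_def]; simp; exact hij
    have e4 := Matrix.det_mul_row (fun j : Fin n => c j.succ)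
      (Matrix.of fun i j : Fin n => Real.exp (t i * c j.succ))
    simp only [Matrix.of_apply] at e4
    simp only [Finset.mem_univ, if_true] at h
    rw [e1, e2, e3, h, e4]
    have hi := ih t (fun j => c j.succ) htm
      (fun i j hij => sub_lt_sub_right (hb (Fin.succ_lt_succ_iff.2 hij)) _)
    refine mul_pos (Finset.prod_pos fun i _ => Real.exp_pos _)
      (mul_pos (Finset.prod_pos fun i _ => sub_pos.2 (ha Fin.castSucc_lt_succ))
        (mul_pos (Finset.prod_pos fun i _ => hcpos i) hi))

theorem tp2_param (A : Matrix (Fin 2) (Fin 2) ℝ) :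
      IsTP2Mat A ↔
        ∃ (lam : ℝ) (α β : Fin 2 → ℝ), 0 < lam ∧ α 0 < α 1 ∧ β 0 < β 1 ∧
          ∀ p q : Fin 2, A p q = lam⁻¹ * Real.exp (α p * β q) := by
  constructor
  · rintro ⟨hp, hd⟩
    rw [Matrix.det_fin_two] at hd
    have hlog : Real.log (A 0 1 * A 1 0) < Real.log (A 0 0 * A 1 1) :=
      Real.log_lt_log (mul_pos (hp _ _) (hp _ _)) (by linarith)
    rw [Real.log_mul (hp _ _).ne' (hp _ _).ne', Real.log_mul (hp _ _).ne' (hp _ _).ne'] at hlog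
    obtain ⟨L, hL⟩ : ∃ L : Fin 2 → Fin 2 → ℝ, ∀ p q, L p q = Real.log (A p q) :=
      ⟨_, fun _ _ => rfl⟩
    simp only [← hL] at hlog
    obtain ⟨d, hdd⟩ : ∃ d, d = L 0 0 + L 1 1 - L 0 1 - L 1 0 := ⟨_, rfl⟩
    have hd0 : 0 < d := by linarith
    obtain ⟨m, hm⟩ : ∃ m, m = (L 0 1 * L 1 0 - L 0 0 * L 1 1) / d := ⟨_, rfl⟩
    have hm' : m * d = L 0 1 * L 1 0 - L 0 0 * L 1 1 := by
      rw [hm]; field_simp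
    refine ⟨Real.exp m, fun p => L p 1 - L p 0, fun q => (L 1 q - L 0 q) / d,
      Real.exp_pos _, by linarith, div_lt_div_of_pos_right (by linarith) hd0, ?_⟩
    intro p q
    have key : (L p 1 - L p 0) * ((L 1 q - L 0 q) / d) = L p q + m := by
      rw [← mul_div_assoc, div_eq_iff hd0.ne', add_mul, hm', hdd]
      fin_cases p <;> fin_cases q <;> simp <;> ring
    simp only [key]
    rw [← Real.exp_neg, ← Real.exp_add, hL]
    rw [show -m + (Real.log (A p q) + m) = Real.log (A p q) by ring, Real.exp_log (hp p q)]
  · rintro ⟨l, α, β, hl, hα, hβ, h⟩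
    refine ⟨fun p q => by rw [h]; positivity, ?_⟩
    rw [Matrix.det_fin_two, h, h, h, h]
    have : Real.exp (α 0 * β 1 + α 1 * β 0) < Real.exp (α 0 * β 0 + α 1 * β 1) :=
      Real.exp_lt_exp.2 (by nlinarith [mul_pos (sub_pos.2 hα) (sub_pos.2 hβ)])
    rw [Real.exp_add, Real.exp_add] at this
    have h2 := mul_pos (mul_pos (inv_pos.2 hl) (inv_pos.2 hl)) (sub_pos.2 this)
    nlinarith [h2]

theorem exists_embed {X : Type} [LinearOrder X] (f : X → ℝ) (hf : StrictMono f)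
    (x₁ x₂ : X) (hx : x₁ < x₂) (a b : ℝ) (hab : a < b) :
    ∃ g : X → ℝ, StrictMono g ∧ g x₁ = a ∧ g x₂ = b := by
  have h := sub_pos.2 (hf hx)
  refine ⟨fun x => a + (f x - f x₁) * ((b - a) / (f x₂ - f x₁)), ?_, by simp, ?_⟩
  · intro x y hxy
    have := mul_lt_mul_of_pos_right (sub_lt_sub_right (hf hxy) (f x₁))
      (div_pos (sub_pos.2 hab) h)
    simpa using this
  · simp only; field_simp; ring

theorem stmt_4 :
    (∀ A : Matrix (Fin 2) (Fin 2) ℝ,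
      IsTP2Mat A ↔
        ∃ (lam : ℝ) (α β : Fin 2 → ℝ), 0 < lam ∧ α 0 < α 1 ∧ β 0 < β 1 ∧
          ∀ p q : Fin 2, A p q = lam⁻¹ * Real.exp (α p * β q)) ∧
    (∀ (X Y : Type) [LinearOrder X] [LinearOrder Y],
      (∃ K : X → Y → ℝ, IsTPKernel K) →
      ∀ x₁ x₂ : X, x₁ < x₂ → ∀ y₁ y₂ : Y, y₁ < y₂ →
      ∀ A : Matrix (Fin 2) (Fin 2) ℝ, IsTP2Mat A →
      ∃ K : X → Y → ℝ, IsTPKernel K ∧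
        K x₁ y₁ = A 0 0 ∧ K x₁ y₂ = A 0 1 ∧ K x₂ y₁ = A 1 0 ∧ K x₂ y₂ = A 1 1) := by
  refine ⟨tp2_param, ?_⟩
  intro X Y _ _ ⟨K, hK⟩ x₁ x₂ hx y₁ y₂ hy A hA
  obtain ⟨l, α, β, hl, hα, hβ, h⟩ := (tp2_param A).1 hA
  have hpos : ∀ x y, 0 < K x y := by
    intro x y
    have := hK 1 (fun _ => x) (fun _ => y) (Subsingleton.strictMono _) (Subsingleton.strictMono _)
    simpa using this
  have hdet : ∀ x x' y y', x < x' → y < y' → K x y' * K x' y < K x y * K x' y' := by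
    intro x x' y y' h1 h2
    have := hK 2 ![x, x'] ![y, y']
      (by rw [Fin.strictMono_iff_lt_succ]; intro i; fin_cases i; simpa using h1)
      (by rw [Fin.strictMono_iff_lt_succ]; intro i; fin_cases i; simpa using h2)
    rw [Matrix.det_fin_two] at this
    simp at this
    linarith
  obtain ⟨f, hf, f1, f2⟩ := exists_embed (fun x => K x y₂ / K x y₁)
    (fun x x' hxx => by
      simp only
      rw [div_lt_div_iff₀ (hpos _ _) (hpos _ _)]
      linarith [hdet x x' y₁ y₂ hxx hy]) x₁ x₂ hx _ _ hα
  obtain ⟨g, hg, g1, g2⟩ := exists_embed (fun y => K x₂ y / K x₁ y)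
    (fun y y' hyy => by
      simp only
      rw [div_lt_div_iff₀ (hpos _ _) (hpos _ _)]
      linarith [hdet x₁ x₂ y y' hx hyy]) y₁ y₂ hy _ _ hβ
  refine ⟨fun x y => l⁻¹ * Real.exp (f x * g y), ?_, ?_, ?_, ?_, ?_⟩
  · intro n x y hxm hym
    have e := Matrix.det_mul_column (fun _ : Fin n => l⁻¹)
      (Matrix.of fun i j : Fin n => Real.exp (f (x i) * g (y j)))
    simp only [Matrix.of_apply] at e
    rw [e]
    exact mul_pos (Finset.prod_pos fun _ _ => inv_pos.2 hl)
      (exp_det_pos n (f ∘ x) (g ∘ y) (hf.comp hxm) (hg.comp hym))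
  all_goals simp only [h, f1, f2, g1, g2]
end

section
/- Let X and Y be non-empty totally ordered sets. The following are equivalent: (1) there exists a totally positive kernel K : X × Y → ℝ; (2) there exists a TP₂ kernel K : X × Y → ℝ; (3) either X or Y is a singleton, or there exist strictly increasing (order-preserving) injections from X into (0,∞) and from Y into (0,∞). The same equivalence holds if X = Y and the kernels in (1) and (2) are required to be symmetric. -/
/-- A kernel is `TP_p` if all determinants of size at most `p` drawn from
increasing tuples are positive. -/
def IsTPKernelOfOrder (p : ℕ) {X Y : Type*} [LinearOrder X] [LinearOrder Y]
    (K : X → Y → ℝ) : Prop :=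
  ∀ n : ℕ, n ≤ p → ∀ (x : Fin n → X) (y : Fin n → Y), StrictMono x → StrictMono y →
    0 < (Matrix.of fun i j : Fin n => K (x i) (y j)).det

lemma cauchy_det_pos : ∀ (n : ℕ) (x y : Fin n → ℝ), StrictMono x → StrictMono y →
    (∀ i, 0 < x i) → (∀ i, 0 < y i) →
    0 < (Matrix.of fun i j : Fin n => 1 / (x i + y j)).det := by
  intro n
  induction n with
  | zero => intro x y _ _ _ _; simp
  | succ n ih =>
    intro x y hx hy px py
    set A : Matrix (Fin (n+1)) (Fin (n+1)) ℝ := Matrix.of fun i j => 1 / (x i + y j) with hA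
    set c : Fin (n+1) → ℝ := fun i => if i = 0 then 0 else (x 0 + y 0) / (x i + y 0) with hc
    set B : Matrix (Fin (n+1)) (Fin (n+1)) ℝ :=
      Matrix.of fun i j => 1 / (x i + y j) - c i * (1 / (x 0 + y j)) with hB
    have hAB : A.det = B.det := by
      apply Matrix.det_eq_of_forall_row_eq_smul_add_const c 0 (by simp [hc])
      intro i j
      simp [hA, hB, hc]
    have hB0 : ∀ i : Fin n, B i.succ 0 = 0 := by
      intro i
      have h1 := px 0
      have h2 := py 0
      have h3 := px i.succ
      have h4 : x 0 + y 0 ≠ 0 := by positivity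
      have h5 : x i.succ + y 0 ≠ 0 := by positivity
      simp only [hB, hc, Matrix.of_apply, Fin.succ_ne_zero, if_false]
      field_simp
      ring
    have hB00 : B 0 0 = 1 / (x 0 + y 0) := by simp [hB, hc]
    have hsub : B.submatrix (Fin.succAbove 0) Fin.succ =
        Matrix.of fun i j : Fin n => ((x i.succ - x 0) / (x i.succ + y 0)) *
          (Matrix.of fun i j : Fin n => ((y j.succ - y 0) / (x 0 + y j.succ)) *
            (Matrix.of fun i j : Fin n => 1 / (x i.succ + y j.succ)) i j) i j := by
      ext i j
      have h1 := px 0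
      have h2 := py 0
      have h3 := px i.succ
      have h6 := py j.succ
      have h4 : x 0 + y j.succ ≠ 0 := by positivity
      have h5 : x i.succ + y 0 ≠ 0 := by positivity
      have h7 : x i.succ + y j.succ ≠ 0 := by positivity
      simp only [hB, hc, Matrix.of_apply, Matrix.submatrix_apply, Fin.zero_succAbove,
        Fin.succ_ne_zero, if_false]
      field_simp
      ring
    rw [hAB, Matrix.det_succ_column_zero, Fin.sum_univ_succ]
    simp only [hB0, hB00, hsub, mul_zero, zero_mul, Finset.sum_const_zero, add_zero]
    rw [Matrix.det_mul_column, Matrix.det_mul_row]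
    have hr := ih (fun i => x i.succ) (fun i => y i.succ)
      (fun i j h => hx (Fin.succ_lt_succ_iff.2 h)) (fun i j h => hy (Fin.succ_lt_succ_iff.2 h))
      (fun i => px _) (fun i => py _)
    have e1 : 0 < ∏ i : Fin n, (x i.succ - x 0) / (x i.succ + y 0) :=
      Finset.prod_pos fun i _ =>
        div_pos (sub_pos.2 (hx (Fin.succ_pos i))) (add_pos (px _) (py _))
    have e2 : 0 < ∏ j : Fin n, (y j.succ - y 0) / (x 0 + y j.succ) :=
      Finset.prod_pos fun i _ =>
        div_pos (sub_pos.2 (hy (Fin.succ_pos i))) (add_pos (px _) (py _))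
    have e0 : 0 < 1 / (x 0 + y 0) := div_pos one_pos (add_pos (px _) (py _))
    simp only [Fin.val_zero, pow_zero, one_mul]
    exact mul_pos e0 (mul_pos e1 (mul_pos e2 hr))

lemma tp_of_mono {X Y : Type} [LinearOrder X] [LinearOrder Y] {f : X → ℝ} {g : Y → ℝ}
    (hf : StrictMono f) (pf : ∀ a, 0 < f a) (hg : StrictMono g) (pg : ∀ b, 0 < g b) :
    IsTPKernel fun a b => 1 / (f a + g b) := fun n x y hx hy =>
  cauchy_det_pos n (f ∘ x) (g ∘ y) (hf.comp hx) (hg.comp hy) (fun _ => pf _) (fun _ => pg _)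

lemma tp_of_subsingleton {X Y : Type} [LinearOrder X] [LinearOrder Y]
    (h : Subsingleton X ∨ Subsingleton Y) :
    IsTPKernel fun (_ : X) (_ : Y) => (1 : ℝ) := by
  intro n x y hx hy
  match n, x, y, hx, hy with
  | 0, x, y, hx, hy => simp
  | 1, x, y, hx, hy => simp
  | n + 2, x, y, hx, hy =>
    exfalso
    have h01 : (0 : Fin (n+2)) < 1 := by simp [Fin.lt_def]
    rcases h with h | h
    · exact (hx h01).ne (Subsingleton.elim _ _)
    · exact (hy h01).ne (Subsingleton.elim _ _)

lemma tp2_pos {X Y : Type} [LinearOrder X] [LinearOrder Y] {K : X → Y → ℝ}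
    (hK : IsTPKernelOfOrder 2 K) (a : X) (b : Y) : 0 < K a b := by
  have := hK 1 (by norm_num) (fun _ => a) (fun _ => b) (Subsingleton.strictMono _)
    (Subsingleton.strictMono _)
  simpa using this

lemma tp2_det {X Y : Type} [LinearOrder X] [LinearOrder Y] {K : X → Y → ℝ}
    (hK : IsTPKernelOfOrder 2 K) {a a' : X} {b b' : Y} (ha : a < a') (hb : b < b') :
    K a b' * K a' b < K a b * K a' b' := by
  have := hK 2 le_rfl ![a, a'] ![b, b'] (by simpa using ha) (by simpa using hb)
  simpa [Matrix.det_fin_two] using this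

lemma emb_left {X Y : Type} [LinearOrder X] [LinearOrder Y] {K : X → Y → ℝ}
    (hK : IsTPKernelOfOrder 2 K) (hY : ¬ Subsingleton Y) :
    ∃ f : X → ℝ, StrictMono f ∧ ∀ a, 0 < f a := by
  rw [not_subsingleton_iff_nontrivial] at hY
  obtain ⟨b, b', hb⟩ := exists_pair_lt Y
  refine ⟨fun a => K a b' / K a b, fun a a' ha => ?_, fun a => div_pos (tp2_pos hK _ _) (tp2_pos hK _ _)⟩
  have := tp2_det hK ha hb
  show K a b' / K a b < K a' b' / K a' b
  rw [div_lt_div_iff₀ (tp2_pos hK _ _) (tp2_pos hK _ _)]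
  linarith

lemma emb_right {X Y : Type} [LinearOrder X] [LinearOrder Y] {K : X → Y → ℝ}
    (hK : IsTPKernelOfOrder 2 K) (hX : ¬ Subsingleton X) :
    ∃ g : Y → ℝ, StrictMono g ∧ ∀ a, 0 < g a := by
  rw [not_subsingleton_iff_nontrivial] at hX
  obtain ⟨b, b', hb⟩ := exists_pair_lt X
  refine ⟨fun a => K b' a / K b a, fun a a' ha => ?_, fun a => div_pos (tp2_pos hK _ _) (tp2_pos hK _ _)⟩
  have := tp2_det hK hb ha
  show K b' a / K b a < K b' a' / K b a'
  rw [div_lt_div_iff₀ (tp2_pos hK _ _) (tp2_pos hK _ _)]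
  linarith

theorem stmt_5 :
    (∀ (X Y : Type) [LinearOrder X] [LinearOrder Y] [Nonempty X] [Nonempty Y],
      List.TFAE
        [∃ K : X → Y → ℝ, IsTPKernel K,
         ∃ K : X → Y → ℝ, IsTPKernelOfOrder 2 K,
         (Subsingleton X ∨ Subsingleton Y) ∨
           ((∃ f : X → ℝ, StrictMono f ∧ ∀ a, 0 < f a) ∧
            (∃ g : Y → ℝ, StrictMono g ∧ ∀ b, 0 < g b))]) ∧
    (∀ (X : Type) [LinearOrder X] [Nonempty X],
      List.TFAE
        [∃ K : X → X → ℝ, (∀ a b, K a b = K b a) ∧ IsTPKernel K,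
         ∃ K : X → X → ℝ, (∀ a b, K a b = K b a) ∧ IsTPKernelOfOrder 2 K,
         Subsingleton X ∨ (∃ f : X → ℝ, StrictMono f ∧ ∀ a, 0 < f a)]) := by
  constructor
  · intro X Y _ _ _ _
    tfae_have 1 → 2 := fun ⟨K, hK⟩ => ⟨K, fun n _ => hK n⟩
    tfae_have 2 → 3 := by
      rintro ⟨K, hK⟩
      by_cases hX : Subsingleton X
      · exact Or.inl (Or.inl hX)
      by_cases hY : Subsingleton Y
      · exact Or.inl (Or.inr hY)
      exact Or.inr ⟨emb_left hK hY, emb_right hK hX⟩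
    tfae_have 3 → 1 := by
      rintro (h | ⟨⟨f, hf, pf⟩, ⟨g, hg, pg⟩⟩)
      · exact ⟨_, tp_of_subsingleton h⟩
      · exact ⟨_, tp_of_mono hf pf hg pg⟩
    tfae_finish
  · intro X _ _
    tfae_have 1 → 2 := fun ⟨K, hs, hK⟩ => ⟨K, hs, fun n _ => hK n⟩
    tfae_have 2 → 3 := by
      rintro ⟨K, -, hK⟩
      by_cases hX : Subsingleton X
      · exact Or.inl hX
      exact Or.inr (emb_left hK hX)
    tfae_have 3 → 1 := by
      rintro (h | ⟨f, hf, pf⟩)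
      · exact ⟨_, fun _ _ => rfl, tp_of_subsingleton (Or.inl h)⟩
      · exact ⟨_, fun a b => by rw [add_comm], tp_of_mono hf pf hf pf⟩
    tfae_finish
end
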